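/- (Blekherman–Sinn) The complete bipartite graph K_{5,5} (on 10 vertices) is 4-independent but is not 3-independent; that is, the minimum d for which K_{5,5} is d-independent is 4. -/

import Mathlib

open MeasureTheory

noncomputable section

/-- The rigidity vector `R_{ij}(p)`: the block vector in `(ℝ^d)^n` whose `i`-th block is
`p i − p j`, whose `j`-th block is `p j − p i`, and whose other blocks are zero. -/
def rigidityVec {n d : ℕ} (p : Fin n → Fin d → ℝ) (i j : Fin n) : Fin n → Fin d → ℝ :=
  fun k => if k = i then p i - p j else if k = j then p j - p i else 0

/-- A graph `G` is `d`-independent if for Lebesgue-almost every `p : {1,…,n} → ℝ^d`,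
the rigidity vectors `{R_{ij}(p) : ij ∈ E(G)}` are linearly independent. -/
def IsIndepGraph {n : ℕ} (d : ℕ) (G : SimpleGraph (Fin n)) : Prop :=
  ∀ᵐ p : Fin n → Fin d → ℝ ∂volume,
    LinearIndependent ℝ (fun e : {e : Fin n × Fin n // G.Adj e.1 e.2 ∧ e.1 < e.2} =>
      rigidityVec p e.1.1 e.1.2)

/-- The complete bipartite graph `K_{5,5}` on vertex set `Fin 10`, with parts
`{0,…,4}` and `{5,…,9}`. -/
def K55 : SimpleGraph (Fin 10) :=
  SimpleGraph.fromRel (fun i j => i.val < 5 ∧ 5 ≤ j.val)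

/-!
The linear relations among the rigidity vectors of a placement `p` are its equilibrium stresses
`ω`. If both sides of a complete bipartite graph have at least `d + 2` vertices, then each side has
an affine dependence, and the product of the two dependences is a nonzero stress: the graph is
dependent in every placement.

For the converse, pass to homogeneous coordinates `q i` in dimension `d + 1`. With
`r i = ∑ j, ω i j` the equilibrium condition reads `r i • q i = ∑ j, ω i j • q j`, and as `ω` only
joins the two sides `A` and `B`, it follows that
`∑ i ∈ A, r i • q i q iᵀ = ∑ i ∈ B, r i • q i q iᵀ` (Bolker and Roth). If the squares `q i q iᵀ` are
linearly independent, then all `r i` vanish, and if moreover the `q i` with `i ∈ A` are linearly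
independent, then so does `ω`. Both hold when the `q i` are vectors `e_a + e_b` for distinct
unordered pairs of indices, with the vertices of `A` on pairs `{a, a}`; these lie on the hyperplane
of coordinate sum `2`, so dropping a coordinate gives a placement in dimension `d`. Independence at
one placement implies independence at almost every placement.
-/

section GenericIndependence

-- If `φ` is a left inverse of `S₀`, then every exceptional `t` is an eigenvalue of `-(φ ∘ S)`.
lemma finite_setOf_not_injective_add_smul {K W V : Type*} [Field K] [AddCommGroup W] [Module K W]
    [FiniteDimensional K W] [AddCommGroup V] [Module K V] (S S₀ : W →ₗ[K] V)
    (h₀ : Function.Injective S₀) : {t : K | ¬ Function.Injective (S + t • S₀)}.Finite := by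
  obtain ⟨φ, hφ⟩ := S₀.exists_leftInverse_of_injective (LinearMap.ker_eq_bot.2 h₀)
  refine (Module.End.finite_hasEigenvalue (-(φ ∘ₗ S))).subset fun t ht => ?_
  obtain ⟨w, hw, hw0⟩ : ∃ w, S w + t • S₀ w = 0 ∧ w ≠ 0 := by
    simpa [injective_iff_map_eq_zero] using ht
  have hφw : φ (S w) + t • w = 0 := by
    simpa [LinearMap.congr_fun hφ w, show φ (S₀ w) = w from LinearMap.congr_fun hφ w]
      using congrArg φ hw
  refine Module.End.hasEigenvalue_of_hasEigenvector (x := w) ⟨?_, hw0⟩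
  simpa [Module.End.mem_eigenspace_iff] using neg_eq_of_add_eq_zero_right hφw

-- On every line parallel to `x₀` only finitely many points are exceptional, and Fubini applies.
theorem ae_linearIndependent_of_linearIndependent {E V ι : Type*} [Finite ι]
    [NormedAddCommGroup E] [NormedSpace ℝ E] [FiniteDimensional ℝ E] [MeasurableSpace E]
    [BorelSpace E] (μ : Measure E) [μ.IsAddHaarMeasure] [NormedAddCommGroup V] [NormedSpace ℝ V]
    (T : ι → E →ₗ[ℝ] V) {x₀ : E} (h₀ : LinearIndependent ℝ fun e => T e x₀) :
    ∀ᵐ x ∂μ, LinearIndependent ℝ fun e => T e x := by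
  have := Fintype.ofFinite ι
  have hopen : IsOpen {x | LinearIndependent ℝ fun e => T e x} :=
    isOpen_setOfPred_linearIndependent.preimage <|
      continuous_pi fun e => (T e).continuous_of_finiteDimensional
  refine ae_mem_of_ae_add_linearMap_mem (LinearMap.toSpanSingleton ℝ E x₀) volume μ
    hopen.measurableSet fun y => ?_
  have hline (t : ℝ) : Fintype.linearCombination ℝ (fun e => T e (y + t • x₀)) =
      Fintype.linearCombination ℝ (fun e => T e y) +
        t • Fintype.linearCombination ℝ (fun e => T e x₀) := by
    ext
    simp [Fintype.linearCombination_apply, Finset.sum_add_distrib, Finset.smul_sum, smul_comm t]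
  have hfin := finite_setOf_not_injective_add_smul (Fintype.linearCombination ℝ fun e => T e y) _
    (linearIndependent_iff_injective_fintypeLinearCombination.1 h₀)
  filter_upwards [hfin.countable.ae_notMem volume] with t ht
  rw [not_not, ← hline] at ht
  exact linearIndependent_iff_injective_fintypeLinearCombination.2 ht

end GenericIndependence

/-- An equilibrium stress of the framework `(G, p)`: edge weights balancing at every vertex. The
weights are encoded as a symmetric matrix indexed by the vertices and vanishing off the edges. -/
structure IsEquilibriumStress {𝕜 ι M : Type*} [Field 𝕜] [Fintype ι] [AddCommGroup M] [Module 𝕜 M]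
    (G : SimpleGraph ι) (p : ι → M) (ω : Matrix ι ι 𝕜) : Prop where
  isSymm : ω.IsSymm
  adj_of_ne_zero : ∀ i j, ω i j ≠ 0 → G.Adj i j
  sum_smul_sub : ∀ i, ∑ j, ω i j • (p i - p j) = 0

section RigidityVec

variable {n d : ℕ} {G : SimpleGraph (Fin n)}

/-- The edges of `G` as ordered pairs `(i, j)` with `i < j`, the index type in `IsIndepGraph`. -/
abbrev OrderedEdge (G : SimpleGraph (Fin n)) : Type :=
  {e : Fin n × Fin n // G.Adj e.1 e.2 ∧ e.1 < e.2}

lemma rigidityVec_eq_single_add_single (p : Fin n → Fin d → ℝ) (i j : Fin n) :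
    rigidityVec p i j = Pi.single i (p i - p j) + Pi.single j (p j - p i) := by
  ext k c
  by_cases hi : k = i <;> by_cases hj : k = j <;> simp_all [rigidityVec]

/-- The rigidity vector of a fixed pair of vertices as a linear map in the placement, the form
needed for `ae_linearIndependent_of_linearIndependent`. -/
def rigidityMap (i j : Fin n) : (Fin n → Fin d → ℝ) →ₗ[ℝ] (Fin n → Fin d → ℝ) where
  toFun p := rigidityVec p i j
  map_add' p q := by
    simp only [rigidityVec_eq_single_add_single, Pi.add_apply, add_sub_add_comm, Pi.single_add]
    abel
  map_smul' r p := by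
    simp only [rigidityVec_eq_single_add_single, Pi.smul_apply, ← smul_sub, Pi.single_smul,
      smul_add, RingHom.id_apply]

lemma isIndepGraph_of_linearIndependent {p : Fin n → Fin d → ℝ}
    (hp : LinearIndependent ℝ fun e : OrderedEdge G => rigidityVec p e.1.1 e.1.2) :
    IsIndepGraph d G :=
  ae_linearIndependent_of_linearIndependent volume
    (fun e : OrderedEdge G => rigidityMap e.1.1 e.1.2) hp

lemma sum_smul_rigidityVec (M : Matrix (Fin n) (Fin n) ℝ) (p : Fin n → Fin d → ℝ) (k : Fin n) :
    (∑ e : Fin n × Fin n, M e.1 e.2 • rigidityVec p e.1 e.2) k =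
      ∑ j, (M + M.transpose) k j • (p k - p j) := by
  simp only [Fintype.sum_prod_type, Finset.sum_apply, rigidityVec_eq_single_add_single,
    Pi.smul_apply, Pi.add_apply, smul_add, Finset.sum_add_distrib, Matrix.add_apply, add_smul,
    Matrix.transpose_apply]
  congr 1
  · rw [Finset.sum_comm]
    simp [Pi.single_apply]
  · simp [Pi.single_apply]

lemma eq_of_forall_orderedEdge {R : Type*} [Zero R] {ω ω' : Matrix (Fin n) (Fin n) R}
    (hω : ω.IsSymm) (hω' : ω'.IsSymm) (hadj : ∀ i j, ω i j ≠ 0 → G.Adj i j)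
    (hadj' : ∀ i j, ω' i j ≠ 0 → G.Adj i j)
    (h : ∀ e : OrderedEdge G, ω e.1.1 e.1.2 = ω' e.1.1 e.1.2) : ω = ω' := by
  ext i j
  by_cases hij : G.Adj i j
  · rcases hij.ne.lt_or_gt with hlt | hgt
    · exact h ⟨(i, j), hij, hlt⟩
    · rw [← hω.apply, ← hω'.apply]
      exact h ⟨(j, i), hij.symm, hgt⟩
  · rw [not_imp_comm.1 (hadj i j) hij, not_imp_comm.1 (hadj' i j) hij]

/-- The symmetric matrix of the weights `g` on the edges of `G`, zero off the edges: it turns the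
coefficients of a linear combination of rigidity vectors into the format of
`IsEquilibriumStress`. -/
def edgeWeightMatrix (g : OrderedEdge G → ℝ) : Matrix (Fin n) (Fin n) ℝ :=
  let M : Matrix (Fin n) (Fin n) ℝ := .of fun i j => Function.extend Subtype.val g 0 (i, j)
  M + M.transpose

lemma edgeWeightMatrix_apply (g : OrderedEdge G → ℝ) (e : OrderedEdge G) :
    edgeWeightMatrix g e.1.1 e.1.2 = g e := by
  have hswap : ¬ ∃ e' : OrderedEdge G, e'.1 = (e.1.2, e.1.1) := by
    rintro ⟨e', he'⟩
    exact lt_asymm e.2.2 (by simpa [he'] using e'.2.2)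
  simp [edgeWeightMatrix, Function.extend_apply' _ _ _ hswap]

lemma isSymm_edgeWeightMatrix (g : OrderedEdge G → ℝ) : (edgeWeightMatrix g).IsSymm :=
  Matrix.isSymm_add_transpose_self _

lemma adj_of_edgeWeightMatrix_ne_zero (g : OrderedEdge G → ℝ) {i j : Fin n}
    (h : edgeWeightMatrix g i j ≠ 0) : G.Adj i j := by
  by_contra hij
  have hne (a b : Fin n) (hab : ¬ G.Adj a b) : ¬ ∃ e : OrderedEdge G, e.1 = (a, b) := by
    rintro ⟨e, he⟩
    exact hab (by simpa [he] using e.2.1)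
  refine h ?_
  simp [edgeWeightMatrix, Function.extend_apply' _ _ _ (hne i j hij),
    Function.extend_apply' _ _ _ (hne j i fun hji => hij hji.symm)]

lemma sum_smul_rigidityVec_orderedEdge [DecidableRel G.Adj] (g : OrderedEdge G → ℝ)
    (p : Fin n → Fin d → ℝ) (k : Fin n) :
    (∑ e, g e • rigidityVec p e.1.1 e.1.2) k = ∑ j, edgeWeightMatrix g k j • (p k - p j) := by
  rw [edgeWeightMatrix, ← sum_smul_rigidityVec, Fintype.sum_of_injective Subtype.val
    Subtype.val_injective _ fun e => Function.extend Subtype.val g 0 e • rigidityVec p e.1 e.2]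
  · rfl
  · intro e he
    simp [Function.extend_apply' _ _ _ he]
  · simp

theorem linearIndependent_rigidityVec_iff (p : Fin n → Fin d → ℝ) :
    (LinearIndependent ℝ fun e : OrderedEdge G => rigidityVec p e.1.1 e.1.2) ↔
      ∀ ω : Matrix (Fin n) (Fin n) ℝ, IsEquilibriumStress G p ω → ω = 0 := by
  classical
  rw [Fintype.linearIndependent_iff]
  constructor
  · intro hp ω hω
    have hrestrict : edgeWeightMatrix (fun e : OrderedEdge G => ω e.1.1 e.1.2) = ω :=
      eq_of_forall_orderedEdge (isSymm_edgeWeightMatrix _) hω.isSymm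
        (fun _ _ => adj_of_edgeWeightMatrix_ne_zero _) hω.adj_of_ne_zero (edgeWeightMatrix_apply _)
    have hzero := hp (fun e => ω e.1.1 e.1.2) <| funext fun k => by
      rw [sum_smul_rigidityVec_orderedEdge, hrestrict, hω.sum_smul_sub, Pi.zero_apply]
    exact eq_of_forall_orderedEdge hω.isSymm Matrix.isSymm_zero hω.adj_of_ne_zero (by simp) hzero
  · intro hp g hg e
    have hω : IsEquilibriumStress G p (edgeWeightMatrix g) :=
      { isSymm := isSymm_edgeWeightMatrix g
        adj_of_ne_zero := fun _ _ => adj_of_edgeWeightMatrix_ne_zero g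
        sum_smul_sub := fun k => by rw [← sum_smul_rigidityVec_orderedEdge, hg, Pi.zero_apply] }
    rw [← edgeWeightMatrix_apply g, hp _ hω, Matrix.zero_apply]

end RigidityVec

section CompleteBetween

variable {𝕜 ι M : Type*} [Field 𝕜] [Fintype ι] [AddCommGroup M] [Module 𝕜 M] {G : SimpleGraph ι}

lemma exists_affineDependence [FiniteDimensional 𝕜 M] (p : ι → M) {s : Finset ι}
    (hs : Module.finrank 𝕜 M + 2 ≤ s.card) :
    ∃ w : ι → 𝕜, (∀ i, w i ≠ 0 → i ∈ s) ∧ w ≠ 0 ∧ ∑ i, w i = 0 ∧ ∑ i, w i • p i = 0 := by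
  classical
  have hdep : ¬ LinearIndepOn 𝕜 (fun i => ((1 : 𝕜), p i)) (s : Set ι) := fun h => by
    have := h.linearIndependent.fintype_card_le_finrank
    simp only [Finset.coe_sort_coe, Fintype.card_coe, Module.finrank_prod,
      Module.finrank_self] at this
    omega
  obtain ⟨f, hf, i, his, hi⟩ := not_linearIndepOn_finset_iff.1 hdep
  simp only [Prod.smul_mk, smul_eq_mul, mul_one, Prod.ext_iff, Prod.fst_sum, Prod.snd_sum,
    Prod.fst_zero, Prod.snd_zero] at hf
  refine ⟨fun i => if i ∈ s then f i else 0, by simp +contextual, fun h => ?_, ?_, ?_⟩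
  · exact hi (by simpa [his] using congrFun h i)
  · simpa using hf.1
  · simpa [ite_smul] using hf.2

lemma sum_mul_smul_sub_eq_zero (c : 𝕜) {w : ι → 𝕜} {p : ι → M} (hw : ∑ i, w i = 0)
    (hwp : ∑ i, w i • p i = 0) (x : M) : ∑ j, (c * w j) • (x - p j) = 0 := by
  simp only [mul_smul, smul_sub, Finset.sum_sub_distrib, ← Finset.smul_sum, ← Finset.sum_smul,
    hw, hwp, zero_smul, smul_zero, sub_zero]

-- Bolker–Roth: products of affine dependences of the two sides are equilibrium stresses.
theorem exists_isEquilibriumStress_of_isCompleteBetween [FiniteDimensional 𝕜 M] {A B : Finset ι}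
    (hG : G.IsCompleteBetween A B) (hA : Module.finrank 𝕜 M + 2 ≤ A.card)
    (hB : Module.finrank 𝕜 M + 2 ≤ B.card) (p : ι → M) :
    ∃ ω : Matrix ι ι 𝕜, IsEquilibriumStress G p ω ∧ ω ≠ 0 := by
  obtain ⟨α, hαA, hα0, hα, hαp⟩ := exists_affineDependence (𝕜 := 𝕜) p hA
  obtain ⟨β, hβB, hβ0, hβ, hβp⟩ := exists_affineDependence (𝕜 := 𝕜) p hB
  refine ⟨.of fun i j => α i * β j + β i * α j, ⟨?_, fun i j hij => ?_, fun i => ?_⟩, fun h => ?_⟩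
  · exact Matrix.IsSymm.ext fun i j => by simp only [Matrix.of_apply]; ring
  · by_cases hαβ : α i * β j = 0
    · have hβα : β i * α j ≠ 0 := by simpa [hαβ] using hij
      exact (hG (hαA j (right_ne_zero_of_mul hβα)) (hβB i (left_ne_zero_of_mul hβα))).symm
    · exact hG (hαA i (left_ne_zero_of_mul hαβ)) (hβB j (right_ne_zero_of_mul hαβ))
  · simp only [Matrix.of_apply, add_smul, Finset.sum_add_distrib,
      sum_mul_smul_sub_eq_zero _ hα hαp, sum_mul_smul_sub_eq_zero _ hβ hβp, add_zero]
  · obtain ⟨i, hi⟩ := Function.ne_iff.1 hα0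
    obtain ⟨j, hj⟩ := Function.ne_iff.1 hβ0
    have hβi : β i = 0 := by
      by_contra hβi
      exact Set.disjoint_left.1 hG.disjoint (hαA i hi) (hβB i hβi)
    have hij := congrFun₂ h i j
    simp only [Matrix.of_apply, Matrix.zero_apply, hβi, zero_mul, add_zero] at hij
    exact mul_ne_zero hi hj hij

theorem not_isIndepGraph_of_isCompleteBetween {n d : ℕ} {G : SimpleGraph (Fin n)}
    {A B : Finset (Fin n)} (hG : G.IsCompleteBetween A B) (hA : d + 2 ≤ A.card)
    (hB : d + 2 ≤ B.card) : ¬ IsIndepGraph d G := fun h => by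
  obtain ⟨p, hp⟩ := h.exists
  obtain ⟨ω, hω, hω0⟩ := exists_isEquilibriumStress_of_isCompleteBetween (𝕜 := ℝ) hG
    (by simpa using hA) (by simpa using hB) p
  exact hω0 ((linearIndependent_rigidityVec_iff p).1 hp ω hω)

end CompleteBetween

section Bipartite

variable {𝕜 ι κ : Type*} [Field 𝕜] [Fintype ι] {G : SimpleGraph ι} {ω : Matrix ι ι 𝕜}

namespace IsEquilibriumStress

lemma sum_smul {M : Type*} [AddCommGroup M] [Module 𝕜 M] {p : ι → M}
    (h : IsEquilibriumStress G p ω) (i : ι) : (∑ j, ω i j) • p i = ∑ j, ω i j • p j := by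
  simpa only [smul_sub, Finset.sum_sub_distrib, ← Finset.sum_smul, sub_eq_zero]
    using h.sum_smul_sub i

-- The `(a, b)` entry equals `∑ i, ∑ j, ε i * ω i j * (p i a * p j b)`. Exchanging `i` and `j`
-- in the double sum shows that it is minus the `(b, a)` entry, but the matrix is symmetric.
lemma sum_smul_vecMulVec_eq_zero [NeZero (2 : 𝕜)] {p : ι → κ → 𝕜} (h : IsEquilibriumStress G p ω)
    {ε : ι → 𝕜} (hε : ∀ i j, G.Adj i j → ε j = -ε i) :
    ∑ i, (ε i * ∑ j, ω i j) • Matrix.vecMulVec (p i) (p i) = 0 := by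
  ext a b
  have hentry (i : ι) (c : κ) : (∑ j, ω i j) * p i c = ∑ j, ω i j * p j c := by
    simpa using congrFun (h.sum_smul i) c
  have hanti (i j : ι) : ε j * ω j i = -(ε i * ω i j) := by
    rw [h.isSymm.apply]
    by_cases hij : ω i j = 0
    · simp [hij]
    · rw [hε i j (h.adj_of_ne_zero i j hij), neg_mul]
  have hexpand (a b : κ) : ∑ i, ε i * (∑ j, ω i j) * (p i a * p i b) =
      ∑ i, ∑ j, ε i * ω i j * (p i a * p j b) := by
    refine Finset.sum_congr rfl fun i _ => ?_
    calc ε i * (∑ j, ω i j) * (p i a * p i b)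
        = ε i * p i a * ((∑ j, ω i j) * p i b) := by ring
      _ = ∑ j, ε i * ω i j * (p i a * p j b) := by
        rw [hentry, Finset.mul_sum]
        exact Finset.sum_congr rfl fun j _ => by ring
  have hswap : ∑ i, ∑ j, ε i * ω i j * (p i a * p j b) =
      -∑ i, ∑ j, ε i * ω i j * (p i b * p j a) := by
    rw [Finset.sum_comm]
    simp only [← Finset.sum_neg_distrib]
    refine Finset.sum_congr rfl fun i _ => Finset.sum_congr rfl fun j _ => ?_
    linear_combination (p j a * p i b) * hanti i j
  have hneg : ∑ i, ε i * (∑ j, ω i j) * (p i a * p i b) =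
      -∑ i, ε i * (∑ j, ω i j) * (p i a * p i b) := by
    nth_rw 1 [hexpand, hswap, ← hexpand]
    simp only [mul_comm (p _ b)]
  have htwo : 2 * ∑ i, ε i * (∑ j, ω i j) * (p i a * p i b) = 0 := by
    linear_combination hneg
  simpa [Matrix.sum_apply, Matrix.vecMulVec_apply] using
    (mul_eq_zero.1 htwo).resolve_left two_ne_zero

theorem eq_zero_of_isBipartiteWith [NeZero (2 : 𝕜)] {p : ι → κ → 𝕜} {A : Finset ι} {B : Set ι}
    (h : IsEquilibriumStress G p ω) (hG : G.IsBipartiteWith A B)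
    (hA : LinearIndepOn 𝕜 p (A : Set ι))
    (hsq : LinearIndependent 𝕜 fun i => Matrix.vecMulVec (p i) (p i)) : ω = 0 := by
  classical
  let ε : ι → 𝕜 := fun i => if i ∈ A then 1 else -1
  have hε0 (i : ι) : ε i ≠ 0 := by
    by_cases hi : i ∈ A <;> simp [ε, hi]
  have hε (i j : ι) (hij : G.Adj i j) : ε j = -ε i := by
    rcases hG.mem_of_adj hij with ⟨hi, hj⟩ | ⟨hi, hj⟩
    · simp [ε, Finset.mem_coe.1 hi, mt Finset.mem_coe.2 (hG.disjoint.notMem_of_mem_right hj)]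
    · simp [ε, Finset.mem_coe.1 hj, mt Finset.mem_coe.2 (hG.disjoint.notMem_of_mem_right hi)]
  have hrow (i : ι) : ∑ j, ω i j = 0 :=
    (mul_eq_zero.1 (Fintype.linearIndependent_iff.1 hsq _
      (h.sum_smul_vecMulVec_eq_zero hε) i)).resolve_left (hε0 i)
  have hzero (i j : ι) (hi : i ∈ B) (hj : j ∈ A) : ω i j = 0 := by
    refine linearIndepOn_finset_iff.1 hA (ω i) ?_ j hj
    rw [Finset.sum_subset A.subset_univ, ← h.sum_smul, hrow, zero_smul]
    intro k _ hk
    by_contra hik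
    have hadj := h.adj_of_ne_zero i k (left_ne_zero_of_smul hik)
    exact hk (hG.mem_of_mem_adj' hi hadj.symm)
  ext i j
  by_contra hij
  rcases hG.mem_of_adj (h.adj_of_ne_zero i j hij) with ⟨hi, hj⟩ | ⟨hi, hj⟩
  · exact hij (h.isSymm.apply i j ▸ hzero j i hj hi)
  · exact hij (hzero i j hi hj)

end IsEquilibriumStress

end Bipartite

section PairVec

variable {κ : Type*} [DecidableEq κ]

/-- The vector `e_a + e_b` of an unordered pair `s(a, b)`, twice the midpoint of two vertices of the
standard simplex. These vectors are the homogeneous coordinates of the witness placement. -/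
def pairVec (𝕜 : Type*) [Field 𝕜] : Sym2 κ → κ → 𝕜 :=
  Sym2.lift ⟨fun a b => Pi.single a 1 + Pi.single b 1, fun _ _ => add_comm _ _⟩

variable {𝕜 : Type*} [Field 𝕜]

lemma pairVec_mk (a b : κ) : pairVec 𝕜 s(a, b) = Pi.single a 1 + Pi.single b 1 := rfl

lemma sum_pairVec [Fintype κ] (e : Sym2 κ) : ∑ c, pairVec 𝕜 e c = 2 := by
  induction e with | _ a b =>
  simp [pairVec_mk, Finset.sum_add_distrib, one_add_one_eq_two]

lemma linearIndependent_pairVec_diag [NeZero (2 : 𝕜)] :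
    LinearIndependent 𝕜 fun a : κ => pairVec 𝕜 s(a, a) := by
  have htwo : (fun a : κ => pairVec 𝕜 s(a, a)) = fun a => (2 : 𝕜) • Pi.single a (1 : 𝕜) := by
    ext a; simp [pairVec_mk, ← two_mul]
  rw [htwo]
  exact (Pi.linearIndependent_single_one κ 𝕜).units_smul fun _ => Units.mk0 2 two_ne_zero

lemma pairVec_mul_pairVec_of_ne {e : Sym2 κ} {a b : κ} (hab : a ≠ b) :
    pairVec 𝕜 e a * pairVec 𝕜 e b = if e = s(a, b) then 1 else 0 := by
  induction e with | _ x y =>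
  simp only [pairVec_mk, Pi.add_apply, Pi.single_apply, Sym2.eq_iff]
  split_ifs <;> grind

lemma pairVec_diag_apply (a b : κ) : pairVec 𝕜 s(b, b) a = if b = a then 2 else 0 := by
  by_cases h : b = a <;> simp [pairVec_mk, Ne.symm, h, one_add_one_eq_two]

-- The entry `(a, b)` isolates the coefficient of `s(a, b)`, first for `a ≠ b`, then for `a = b`.
lemma linearIndependent_vecMulVec_pairVec [Finite κ] [NeZero (2 : 𝕜)] :
    LinearIndependent 𝕜 fun e : Sym2 κ =>
      Matrix.vecMulVec (pairVec 𝕜 e) (pairVec 𝕜 e) := by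
  have := Fintype.ofFinite κ
  rw [Fintype.linearIndependent_iff]
  intro g hg
  have hentry (a b : κ) : ∑ e, g e * (pairVec 𝕜 e a * pairVec 𝕜 e b) = 0 := by
    simpa [Matrix.sum_apply, Matrix.vecMulVec_apply] using congrFun₂ hg a b
  have hoff (a b : κ) (hab : a ≠ b) : g s(a, b) = 0 := by
    simpa [pairVec_mul_pairVec_of_ne hab] using hentry a b
  have hdiag (a : κ) : g s(a, a) = 0 := by
    have hsingle := Finset.sum_eq_single_of_mem
      (f := fun e => g e * (pairVec 𝕜 e a * pairVec 𝕜 e a)) s(a, a) (Finset.mem_univ _) ?_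
    · simpa [hentry, pairVec_diag_apply, two_ne_zero] using hsingle.symm
    · intro e _ he
      induction e with | _ x y =>
      by_cases hxy : x = y
      · subst hxy
        have hxa : x ≠ a := by rintro rfl; exact he rfl
        simp [pairVec_diag_apply, hxa]
      · simp [hoff x y hxy]
  intro e
  induction e with | _ a b =>
  by_cases hab : a = b
  · exact hab ▸ hdiag a
  · exact hoff a b hab

end PairVec

section Placement

lemma IsEquilibriumStress.of_tail {𝕜 ι : Type*} [Field 𝕜] [Fintype ι] {G : SimpleGraph ι}
    {ω : Matrix ι ι 𝕜} {d : ℕ} {q : ι → Fin (d + 1) → 𝕜} {s : 𝕜} (hq : ∀ i, ∑ c, q i c = s)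
    (h : IsEquilibriumStress G (fun i => Fin.tail (q i)) ω) : IsEquilibriumStress G q ω where
  isSymm := h.isSymm
  adj_of_ne_zero := h.adj_of_ne_zero
  sum_smul_sub i := by
    have hsucc (c : Fin d) : ∑ j, ω i j * (q i c.succ - q j c.succ) = 0 := by
      simpa [Fin.tail] using congrFun (h.sum_smul_sub i) c
    have hzero (j : ι) : q i 0 - q j 0 = -∑ c : Fin d, (q i c.succ - q j c.succ) := by
      have hi := hq i
      have hj := hq j
      rw [Fin.sum_univ_succ] at hi hj
      rw [Finset.sum_sub_distrib]
      linear_combination hi - hj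
    ext c
    refine Fin.cases ?_ (fun c => ?_) c
    · simp only [Finset.sum_apply, Pi.smul_apply, Pi.sub_apply, smul_eq_mul, hzero, mul_neg,
        Finset.mul_sum, Finset.sum_neg_distrib, Pi.zero_apply]
      rw [Finset.sum_comm]
      simp [hsucc]
    · simpa using hsucc c

lemma exists_embedding_eqOn {α β : Type*} [Fintype α] [Fintype β]
    (hcard : Fintype.card α ≤ Fintype.card β) {s : Finset α} {f : α → β} (hf : Set.InjOn f s) :
    ∃ g : α ↪ β, Set.EqOn g f s := by
  classical
  obtain ⟨t, hst, ht⟩ := Finset.exists_superset_card_eq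
    (Finset.card_image_le.trans s.card_le_univ : (s.image f).card ≤ Fintype.card α) hcard
  obtain ⟨g, hg⟩ := Finset.exists_equiv_extend_of_card_eq ht.symm hst hf
  exact ⟨g.toEmbedding.trans (Function.Embedding.subtype _), hg⟩

theorem isIndepGraph_of_isBipartiteWith {n d : ℕ} {G : SimpleGraph (Fin n)} {A : Finset (Fin n)}
    {B : Set (Fin n)} (hG : G.IsBipartiteWith A B) (hA : A.card ≤ d + 1)
    (hn : n ≤ (d + 2).choose 2) : IsIndepGraph d G := by
  obtain ⟨f, -, hf⟩ : ∃ f : Fin n → Fin (d + 1), ↑A ⊆ f ⁻¹' Set.univ ∧ Set.InjOn f A :=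
    A.finite_toSet.exists_injOn_of_encard_le (by simpa using mod_cast hA)
  obtain ⟨σ, hσ⟩ := exists_embedding_eqOn (β := Sym2 (Fin (d + 1)))
    (by simpa [Sym2.card] using hn) (Sym2.diag_injective.comp_injOn hf)
  let q (i : Fin n) : Fin (d + 1) → ℝ := pairVec ℝ (σ i)
  have hqA : LinearIndepOn ℝ q A := by
    have hq : Set.EqOn q (fun i => pairVec ℝ s(f i, f i)) A := fun i hi =>
      congrArg (pairVec ℝ) (hσ hi)
    rw [linearIndepOn_congr hq]
    exact linearIndependent_pairVec_diag.comp _ hf.injective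
  refine isIndepGraph_of_linearIndependent (p := fun i => Fin.tail (q i)) <|
    (linearIndependent_rigidityVec_iff _).2 fun ω hω => ?_
  exact (hω.of_tail fun i => sum_pairVec (σ i)).eq_zero_of_isBipartiteWith hG hqA
    (linearIndependent_vecMulVec_pairVec.comp σ σ.injective)

end Placement

theorem K55_indep_four_general {n : ℕ} (d : ℕ) {G : SimpleGraph (Fin n)} {A B : Finset (Fin n)}
    (hG : G.IsBipartiteWith A B) (hAB : G.IsCompleteBetween A B) (hcard : A.card ≤ B.card)
    (hn : n ≤ (A.card + 1).choose 2) : IsIndepGraph d G ↔ A.card ≤ d + 1 := by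
  refine ⟨fun h => ?_, fun h => isIndepGraph_of_isBipartiteWith hG h ?_⟩
  · by_contra! hlt
    exact not_isIndepGraph_of_isCompleteBetween hAB hlt (hlt.trans_le hcard) h
  · exact hn.trans (Nat.choose_le_choose 2 (by omega))

lemma K55_isBipartiteWith :
    K55.IsBipartiteWith (Finset.Iio 5 : Finset (Fin 10)) (Finset.Ici 5 : Finset (Fin 10)) where
  disjoint := by
    rw [Finset.disjoint_coe]
    decide
  mem_of_adj i j hij := by
    simpa [K55, Fin.lt_def, Fin.le_def, and_comm] using hij.2

lemma K55_isCompleteBetween :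
    K55.IsCompleteBetween (Finset.Iio 5 : Finset (Fin 10)) (Finset.Ici 5 : Finset (Fin 10)) := by
  intro i hi j hj
  simp only [Finset.coe_Iio, Finset.coe_Ici, Set.mem_Iio, Set.mem_Ici] at hi hj
  exact ⟨(hi.trans_le hj).ne, .inl ⟨hi, hj⟩⟩

/-- Blekherman–Sinn: `K_{5,5}` is `4`-independent but not `3`-independent; the minimum
`d` for which `K_{5,5}` is `d`-independent is `4`. -/
theorem K55_indep_four : IsIndepGraph 4 K55 ∧ ¬ IsIndepGraph 3 K55 ∧
    sInf {d : ℕ | IsIndepGraph d K55} = 4 := by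
  have hK55 (d : ℕ) : IsIndepGraph d K55 ↔ 4 ≤ d := by
    simpa using K55_indep_four_general d K55_isBipartiteWith K55_isCompleteBetween
      (by decide) (by decide)
  simp only [hK55]
  exact ⟨le_rfl, by decide, csInf_Ici⟩
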